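/- Let n ≥ 4, 3 ≤ r < n − ⌊n/3⌋, 1 ≤ p ≤ q−2 ≤ n−2, and let A be a generating set of PORD(n,r). Then for each 1 ≤ s ≤ min{p, q−p, r−1} with (q,s) ≠ (n,1), there exists α ∈ A whose restriction to dom(γ_{p,q}^{r,s}) equals γ_{p,q}^{r,s}. -/

import Mathlib

/-!
Partial transformations on the chain X_n = {1 < 2 < ... < n}, encoded as
functions `ℕ → Option ℕ` (with `none` meaning "undefined"), composed
left-to-right: `x(αβ) = (xα)β`.
-/

namespace OrientedPT

noncomputable section
open scoped Classical

/-- A partial transformation, as a partial map on `ℕ`. -/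
def PTrans : Type := ℕ → Option ℕ

instance : Mul PTrans := ⟨fun f g x => (f x).bind g⟩

theorem mul_apply (f g : PTrans) (x : ℕ) : (f * g) x = (f x).bind g := rfl

instance : Semigroup PTrans where
  mul_assoc f g h := by
    funext x
    show ((f x).bind g).bind h = (f x).bind (fun y => (g y).bind h)
    cases f x <;> rfl

/-- The domain of a partial transformation. -/
def domSet (f : PTrans) : Set ℕ := {x | f x ≠ none}

/-- The image of a partial transformation. -/
def im (f : PTrans) : Set ℕ := {y | ∃ x, f x = some y}

/-- The set of fixed points: `fix(α) = {x ∈ dom α : xα = x}`. -/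
def fixSet (f : PTrans) : Set ℕ := {x | f x = some x}

/-- The value of `f` at `x` (defaulting to `0` off the domain). -/
def val (f : PTrans) (x : ℕ) : ℕ := (f x).getD 0

/-- `f` is a partial transformation on `X_n = {1,…,n}`. -/
def IsPT (n : ℕ) (f : PTrans) : Prop :=
  domSet f ⊆ Set.Icc 1 n ∧ im f ⊆ Set.Icc 1 n

/-- Order-decreasing: `xα ≤ x` for all `x ∈ dom α`. -/
def OrderDecr (f : PTrans) : Prop := ∀ x y, f x = some y → y ≤ x

/-- Order-preserving. -/
def OrderPres (f : PTrans) : Prop :=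
  ∀ x y u v, f x = some u → f y = some v → x ≤ y → u ≤ v

/-- Order-reversing. -/
def OrderRev (f : PTrans) : Prop :=
  ∀ x y u v, f x = some u → f y = some v → x ≤ y → v ≤ u

/-- Monotone: order-preserving or order-reversing. -/
def IsMonotone (f : PTrans) : Prop := OrderPres f ∨ OrderRev f

/-- Injectivity of a partial transformation. -/
def Inj (f : PTrans) : Prop := ∀ x y z, f x = some z → f y = some z → x = y

/-- The cyclic successor of `a` in the set `D`: the least element of `D`
above `a` if there is one, and otherwise the least element of `D`. -/
def cycSucc (D : Set ℕ) (a : ℕ) : ℕ :=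
  if {x ∈ D | a < x}.Nonempty then sInf {x ∈ D | a < x} else sInf D

/-- The cyclic descents of `f`: those `a ∈ dom f` whose cyclic successor in
`dom f` has a strictly smaller value. Writing `dom f = {x₁ < ⋯ < x_t}` these
are exactly the indices `1 ≤ i ≤ t` with `x_{i+1}α < x_iα` (where `x_{t+1} = x₁`). -/
def descents (f : PTrans) : Set ℕ :=
  {a ∈ domSet f | val f (cycSucc (domSet f) a) < val f a}

/-- The cyclic ascents of `f`. -/
def ascents (f : PTrans) : Set ℕ :=
  {a ∈ domSet f | val f a < val f (cycSucc (domSet f) a)}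

/-- Orientation-preserving: at most one cyclic descent. -/
def OrientPres (f : PTrans) : Prop := (descents f).ncard ≤ 1

/-- Orientation-reversing: at most one cyclic ascent. -/
def OrientRev (f : PTrans) : Prop := (ascents f).ncard ≤ 1

/-- Oriented: orientation-preserving or orientation-reversing. -/
def Oriented (f : PTrans) : Prop := OrientPres f ∨ OrientRev f

/-- `PORD n`: all oriented and order-decreasing partial transformations on `X_n`. -/
def PORD (n : ℕ) : Set PTrans := {f | IsPT n f ∧ Oriented f ∧ OrderDecr f}

/-- `PORD(n,r) = {α ∈ PORD_n : |im α| ≤ r}`. -/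
def PORDr (n r : ℕ) : Set PTrans := {f ∈ PORD n | (im f).ncard ≤ r}

/-- `POPD n`: the orientation-preserving elements of `PORD n`. -/
def POPD (n : ℕ) : Set PTrans := {f ∈ PORD n | OrientPres f}

/-- `PORD_n^* = PORD_n \ POPD_n`. -/
def PORDstar (n : ℕ) : Set PTrans := PORD n \ POPD n

/-- `PMD n`: monotone and order-decreasing partial transformations on `X_n`. -/
def PMD (n : ℕ) : Set PTrans := {f | IsPT n f ∧ IsMonotone f ∧ OrderDecr f}

/-- `PRD_n^* = PORD_n^* \ PMD_n`. -/
def PRDstar (n : ℕ) : Set PTrans := PORDstar n \ PMD n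

/-- `IORD n`: the injective elements of `PORD n`. -/
def IORD (n : ℕ) : Set PTrans := {f ∈ PORD n | Inj f}

/-- `IORD(n,r) = {α ∈ IORD_n : |im α| ≤ r}`. -/
def IORDr (n r : ℕ) : Set PTrans := {f ∈ IORD n | (im f).ncard ≤ r}

/-- `A` is a generating set of `S`: `A ⊆ S` and the smallest subsemigroup
containing `A` is `S`. -/
def IsGenSet (S A : Set PTrans) : Prop :=
  A ⊆ S ∧ (Subsemigroup.closure A : Set PTrans) = S

/-- A minimal generating set: a generating set of minimum cardinality. -/
def IsMinGenSet (S A : Set PTrans) : Prop :=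
  IsGenSet S A ∧ ∀ B : Set PTrans, IsGenSet S B → A.ncard ≤ B.ncard

/-- The rank of `S`: the minimum cardinality of a generating set of `S`. -/
def rank (S : Set PTrans) : ℕ :=
  sInf {k | ∃ A : Set PTrans, IsGenSet S A ∧ A.ncard = k}

/-- `z` is undecomposable in `S`: `z = xy` with `x, y ∈ S` forces `z = x` or `z = y`. -/
def Undecomposable (S : Set PTrans) (z : PTrans) : Prop :=
  ∀ x ∈ S, ∀ y ∈ S, z = x * y → z = x ∨ z = y

/-- `T` is a subsemigroup of (the semigroup given by the subset) `S`. -/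
def IsSubsemigroupOf (T S : Set PTrans) : Prop :=
  T ⊆ S ∧ ∀ a ∈ T, ∀ b ∈ T, a * b ∈ T

/-- `T` is a maximal subsemigroup of `S`: a maximal element, under inclusion,
of the family of proper subsemigroups of `S`. -/
def IsMaximalSubsemigroup (S T : Set PTrans) : Prop :=
  IsSubsemigroupOf T S ∧ T ≠ S ∧
    ∀ U : Set PTrans, IsSubsemigroupOf U S → U ≠ S → T ⊆ U → T = U

/-- The restriction of `f` to `Y`. -/
def restrict (f : PTrans) (Y : Set ℕ) : PTrans :=
  fun x => if x ∈ Y then f x else none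

/-- The partial identity `1_Y` on `Y`. -/
def partialId (Y : Set ℕ) : PTrans := fun x => if x ∈ Y then some x else none

/-- `ξ_{p,q}`: domain `[p, q+1]`, fixes every point of `[p,q]`, maps `q+1` to `p`. -/
def xi (p q : ℕ) : PTrans := fun x =>
  if p ≤ x ∧ x ≤ q then some x else if x = q + 1 then some p else none

/-- `γ_{p,q}` (for `1 ≤ p ≤ q−2 ≤ n−2`): with `k = min(p−1, q−p−1)` and
`l = min(q−p−1, n−q)`, it has domain `[p, p+k] ∪ [q, q+l]` and maps
`p+i ↦ p−i` and `q+j ↦ q−j`. -/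
def gamma (n p q : ℕ) : PTrans := fun x =>
  if p ≤ x ∧ x ≤ p + min (p - 1) (q - p - 1) then some (2 * p - x)
  else if q ≤ x ∧ x ≤ q + min (q - p - 1) (n - q) then some (2 * q - x)
  else none

/-- `γ_{p,q}^{r,s}`: with `u = min(r−s, q−p, n−q+1)`, it has domain
`[p, p+s−1] ∪ [q, q+u−1]` and maps `p+i ↦ p−i` and `q+j ↦ q−j`. -/
def gammaRS (n r p q s : ℕ) : PTrans := fun x =>
  if p ≤ x ∧ x + 1 ≤ p + s then some (2 * p - x)
  else if q ≤ x ∧ x + 1 ≤ q + min (r - s) (min (q - p) (n - q + 1)) then some (2 * q - x)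
  else none

/-- `δ^a_Y`: domain `Y ∪ {a}`, fixes every point of `Y`, maps `a` to `a−1`. -/
def deltaMap (a : ℕ) (Y : Set ℕ) : PTrans :=
  fun x => if x ∈ Y then some x else if x = a then some (a - 1) else none

/-- `ζ_Z`: with `a = max Z` and `b = min Z`, domain `Z ∪ {a+1}`, fixes every
point of `Z`, maps `a+1` to `b−1`. -/
def zetaMap (Z : Set ℕ) : PTrans :=
  fun x => if x ∈ Z then some x else if x = sSup Z + 1 then some (sInf Z - 1) else none

/-- `E_r`: the idempotents of `PORD_n` with image of size exactly `r`. -/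
def Eset (n r : ℕ) : Set PTrans := {f ∈ PORD n | f * f = f ∧ (im f).ncard = r}

/-- `F_r = {ξ_{p,q}^r : 1 ≤ p ≤ n−2, p+1 ≤ q ≤ p+r−2 ≤ n−1}`. -/
def Fset (n r : ℕ) : Set PTrans :=
  {f | ∃ p q : ℕ, 1 ≤ p ∧ p + 2 ≤ n ∧ p + 1 ≤ q ∧ q + 2 ≤ p + r ∧ p + r ≤ n + 1 ∧
    f = xi p q}

/-- `G_n = {γ_{p,q} : 1 ≤ p ≤ q−2 ≤ n−2} \ {γ_{1,n}}`. -/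
def Gset (n : ℕ) : Set PTrans :=
  {f | ∃ p q : ℕ, 1 ≤ p ∧ p + 2 ≤ q ∧ q ≤ n ∧ f = gamma n p q} \ {gamma n 1 n}

/-- `H_n^r = {γ_{p,q}^{r,s} : 1 ≤ p ≤ q−2 ≤ n−2, 1 ≤ s ≤ min{p, q−p, r−1}, (q,s) ≠ (n,1)}`. -/
def Hset (n r : ℕ) : Set PTrans :=
  {f | ∃ p q s : ℕ, 1 ≤ p ∧ p + 2 ≤ q ∧ q ≤ n ∧ 1 ≤ s ∧
    s ≤ min p (min (q - p) (r - 1)) ∧ ¬(q = n ∧ s = 1) ∧ f = gammaRS n r p q s}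

/-- `EI_r = {1_Y : Y ⊆ X_n, |Y| = r}`. -/
def EIset (n r : ℕ) : Set PTrans :=
  {f | ∃ Y : Set ℕ, Y ⊆ Set.Icc 1 n ∧ Y.ncard = r ∧ f = partialId Y}

/-- `FI_r = {δ^a_Y : 2 ≤ a ≤ n, Y ⊆ X_n \ {a−1,a}, |Y| = r−1}`. -/
def FIset (n r : ℕ) : Set PTrans :=
  {f | ∃ (a : ℕ) (Y : Set ℕ), 2 ≤ a ∧ a ≤ n ∧ Y ⊆ Set.Icc 1 n \ {a - 1, a} ∧
    Y.ncard = r - 1 ∧ f = deltaMap a Y}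

/-- `GI_k = {ζ_Z : Z ⊆ X_n \ {1,n}, |Z| = k−1}`. -/
def GIset (n k : ℕ) : Set PTrans :=
  {f | ∃ Z : Set ℕ, Z ⊆ Set.Icc 1 n \ {1, n} ∧ Z.ncard = k - 1 ∧ f = zetaMap Z}

/-- `GI_k^c`: those `ζ_Z ∈ GI_k` with `Z` a convex subset (an interval). -/
def GIcset (n k : ℕ) : Set PTrans :=
  {f | ∃ Z : Set ℕ, Z ⊆ Set.Icc 1 n \ {1, n} ∧ Z.ncard = k - 1 ∧ Z.OrdConnected ∧
    f = zetaMap Z}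

/-- `F^r_{p,q} = {α ∈ PORD(n,r) : α restricted to [p, q+1] equals ξ_{p,q}^r}`. -/
def Frestr (n r p q : ℕ) : Set PTrans :=
  {f ∈ PORDr n r | restrict f (Set.Icc p (q + 1)) = xi p q}

/-- `G_{p,q} = {α ∈ PORD^*(n,r) : α restricted to dom(γ_{p,q}) equals γ_{p,q}}`. -/
def Grestr (n r p q : ℕ) : Set PTrans :=
  {f ∈ PORDr n r ∩ PORDstar n | restrict f (domSet (gamma n p q)) = gamma n p q}

/-- `H^{r,s}_{p,q} = {α ∈ PORD^*(n,r) : α restricted to dom(γ^{r,s}_{p,q}) equals γ^{r,s}_{p,q}}`. -/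
def Hrestr (n r p q s : ℕ) : Set PTrans :=
  {f ∈ PORDr n r ∩ PORDstar n |
    restrict f (domSet (gammaRS n r p q s)) = gammaRS n r p q s}

end

end OrientedPT

/-!
Suppose an orientation-reversing `γ` reflects each of two blocks starting at `p < q` about its
left endpoint, and write `γ` as a product of order-decreasing oriented maps. The first factor `α`
is injective on `dom γ` and lies pointwise between `γ` and the identity, so it fixes `p` and `q`.
Since at most one cyclic descent (or ascent) is allowed, each of these fixed points makes `α`
strictly monotone on the other block, increasing or decreasing according to its orientation. An
increasing `α` must then be the identity on both blocks, a decreasing one must agree with `γ`. In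
the first case `α` can be cancelled, so by induction some factor agrees with `γ` on `dom γ`.
-/

namespace OrientedPT

section CyclicDescents

variable {β : Type*} [LinearOrder β] {D : Set ℕ} {g : ℕ → β}

/-- The cyclic descents of `g` along `D`. The codomain is an arbitrary linear order so that the
ascents of a partial transformation are covered by the dual order on `ℕ`. -/
def cycDescents (g : ℕ → β) (D : Set ℕ) : Set ℕ := {a ∈ D | g (cycSucc D a) < g a}

theorem isLeast_cycSucc {a : ℕ} (h : {x ∈ D | a < x}.Nonempty) :
    IsLeast {x ∈ D | a < x} (cycSucc D a) := by
  rw [cycSucc, if_pos h]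
  exact isLeast_csInf h

theorem cycSucc_eq_add_one {a : ℕ} (h : a + 1 ∈ D) : cycSucc D a = a + 1 :=
  (isLeast_cycSucc ⟨a + 1, h, a.lt_succ_self⟩).unique ⟨⟨h, a.lt_succ_self⟩, fun _ hx => hx.2⟩

theorem cycSucc_eq_of_isGreatest {M m : ℕ} (hM : IsGreatest D M) (hm : IsLeast D m) :
    cycSucc D M = m := by
  rw [cycSucc, if_neg fun ⟨_, hx, hMx⟩ => (hM.2 hx).not_gt hMx]
  exact hm.csInf_eq

theorem exists_cycDescent_mem_Ico {x y : ℕ} (hx : x ∈ D) (hy : y ∈ D) (hxy : x < y)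
    (h : g y < g x) : ∃ a ∈ cycDescents g D, a ∈ Set.Ico x y := by
  obtain ⟨a, ⟨⟨haD, hxa, hay⟩, hya⟩, hmax⟩ :=
    ((Set.finite_Ico x y).subset fun _ ha => ha.1.2 :
      {a | (a ∈ D ∧ a ∈ Set.Ico x y) ∧ g y < g a}.Finite).exists_maximal
      ⟨x, ⟨hx, le_rfl, hxy⟩, h⟩
  obtain ⟨⟨hbD, hab⟩, hle⟩ := isLeast_cycSucc ⟨y, hy, hay⟩
  refine ⟨a, ⟨haD, ?_⟩, hxa, hay⟩
  by_contra! hasc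
  have hyb : g y < g (cycSucc D a) := hya.trans_le hasc
  have hby : cycSucc D a < y := (hle ⟨hy, hay⟩).lt_of_ne fun he => hyb.ne (by rw [he])
  exact (hmax ⟨⟨hbD, hxa.trans hab.le, hby⟩, hyb⟩ hab.le).not_gt hab

theorem exists_cycDescent_notMem_Ico (hD : D.Finite) {x z : ℕ} (hx : x ∈ D) (hz : z ∈ D)
    (h : g x < g z) : ∃ a ∈ cycDescents g D, a ∉ Set.Ico x z := by
  have hM : IsGreatest D (sSup D) := ⟨Nat.sSup_mem ⟨x, hx⟩ hD.bddAbove,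
    fun _ hc => le_csSup hD.bddAbove hc⟩
  have hm : IsLeast D (sInf D) := isLeast_csInf ⟨x, hx⟩
  by_cases hwrap : g (sInf D) < g (sSup D)
  · refine ⟨sSup D, ⟨hM.1, ?_⟩, fun hmem => hmem.2.not_ge (hM.2 hz)⟩
    rwa [cycSucc_eq_of_isGreatest hM hm]
  by_cases hlow : g x < g (sInf D)
  · obtain ⟨a, ha, hax⟩ := exists_cycDescent_mem_Ico hm.1 hx
      ((hm.2 hx).lt_of_ne fun he => hlow.ne (by rw [he])) hlow
    exact ⟨a, ha, fun hmem => hmem.1.not_gt hax.2⟩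
  · have hhigh : g (sSup D) < g z := ((not_lt.mp hwrap).trans (not_lt.mp hlow)).trans_lt h
    obtain ⟨a, ha, hza⟩ := exists_cycDescent_mem_Ico hz hM.1
      ((hM.2 hz).lt_of_ne fun he => hhigh.ne (by rw [← he])) hhigh
    exact ⟨a, ha, fun hmem => hmem.2.not_ge hza.1⟩

theorem mem_Icc_of_notMem_Icc (hD : D.Finite) (hdesc : (cycDescents g D).Subsingleton)
    {x y z : ℕ} (hx : x ∈ D) (hy : y ∈ D) (hz : z ∈ D) (hxy : x < y) (hzxy : z ∉ Set.Icc x y)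
    (h : g y < g x) : g z ∈ Set.Icc (g y) (g x) := by
  obtain ⟨a, ha, hxa, hay⟩ := exists_cycDescent_mem_Ico hx hy hxy h
  have hout : z < x ∨ y < z := by simpa only [Set.mem_Icc, not_and_or, not_le] using hzxy
  constructor <;> by_contra! hlt <;> rcases hout with hzx | hyz
  · obtain ⟨b, hb, hbzy⟩ := exists_cycDescent_notMem_Ico hD hz hy hlt
    exact hbzy (hdesc ha hb ▸ ⟨hzx.le.trans hxa, hay⟩)
  · obtain ⟨b, hb, hyb, -⟩ := exists_cycDescent_mem_Ico hy hz hyz hlt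
    exact hay.not_ge (hdesc ha hb ▸ hyb)
  · obtain ⟨b, hb, -, hbx⟩ := exists_cycDescent_mem_Ico hz hx hzx hlt
    exact hxa.not_gt (hdesc ha hb ▸ hbx)
  · obtain ⟨b, hb, hbxz⟩ := exists_cycDescent_notMem_Ico hD hx hz hlt
    exact hbxz (hdesc ha hb ▸ ⟨hxa, hay.trans hyz⟩)

theorem monotoneOn_of_cycDescents_subsingleton (hD : D.Finite)
    (hdesc : (cycDescents g D).Subsingleton) {S : Set ℕ} (hS : S ⊆ D) {z : ℕ} (hz : z ∈ D)
    (hzS : ∀ x ∈ S, ∀ y ∈ S, z ∉ Set.Icc x y)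
    (hgz : ∀ x ∈ S, ∀ y ∈ S, g z ∉ Set.Icc (g x) (g y)) : MonotoneOn g S := by
  intro x hx y hy hxy
  by_contra! hlt
  have hne : x < y := hxy.lt_of_ne fun he => hlt.ne (by rw [he])
  exact hgz y hy x hx
    (mem_Icc_of_notMem_Icc hD hdesc (hS hx) (hS hy) hz hne (hzS x hx y hy) hlt)

end CyclicDescents

section Values

variable {f g : PTrans} {x y : ℕ}

theorem val_eq_of_eq_some (h : f x = some y) : val f x = y := by
  rw [val, h, Option.getD_some]

theorem mem_domSet_of_eq_some (h : f x = some y) : x ∈ domSet f :=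
  Option.ne_none_iff_exists'.mpr ⟨y, h⟩

theorem eq_some_val (hx : x ∈ domSet f) : f x = some (val f x) := by
  obtain ⟨y, hy⟩ := Option.ne_none_iff_exists'.mp hx
  rw [val_eq_of_eq_some hy, hy]

theorem mul_apply_of_eq_some (h : f x = some y) : (f * g) x = g y := by
  rw [mul_apply, h]
  rfl

theorem domSet_mul_subset : domSet (f * g) ⊆ domSet f := by
  intro x hx hfx
  apply hx
  rw [mul_apply, hfx]
  rfl

theorem val_mul (hx : x ∈ domSet f) : val (f * g) x = val g (val f x) :=
  congrArg (Option.getD · 0) (mul_apply_of_eq_some (eq_some_val hx))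

theorem eqOn_mul_of_subset_fixSet {Y : Set ℕ} (hf : Y ⊆ fixSet f) : Y.EqOn (f * g) g :=
  fun _ hx => mul_apply_of_eq_some (hf hx)

theorem ncard_im_le (hD : (domSet f).Finite) : (im f).ncard ≤ (domSet f).ncard := by
  have him : im f ⊆ val f '' domSet f := fun y ⟨x, hxy⟩ =>
    ⟨x, mem_domSet_of_eq_some hxy, val_eq_of_eq_some hxy⟩
  exact (Set.ncard_le_ncard him (hD.image _)).trans (Set.ncard_image_le hD)

theorem OrderDecr.val_le (hf : OrderDecr f) (x : ℕ) : val f x ≤ x := by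
  cases h : f x with
  | none => simp [val, h]
  | some y => exact val_eq_of_eq_some h ▸ hf x y h

theorem OrderDecr.mul (hf : OrderDecr f) (hg : OrderDecr g) : OrderDecr (f * g) := by
  intro x z h
  obtain ⟨y, hxy, hyz⟩ := Option.bind_eq_some_iff.mp h
  exact (hg y z hyz).trans (hf x y hxy)

theorem restrict_domSet_eq_of_eqOn (h : (domSet g).EqOn f g) : restrict f (domSet g) = g := by
  funext x
  unfold restrict
  split_ifs with hx
  · exact h hx
  · exact (not_not.mp hx).symm

end Values

section Orientation

variable {f : PTrans} {S : Set ℕ} {z : ℕ}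

theorem OrientPres.strictMonoOn_val (hf : OrientPres f) (hD : (domSet f).Finite)
    (hS : S ⊆ domSet f) (hinj : S.InjOn (val f)) (hz : z ∈ domSet f)
    (hzS : ∀ x ∈ S, ∀ y ∈ S, z ∉ Set.Icc x y)
    (hfz : ∀ x ∈ S, ∀ y ∈ S, val f z ∉ Set.Icc (val f x) (val f y)) :
    StrictMonoOn (val f) S := by
  have hdesc : (cycDescents (val f) (domSet f)).Subsingleton := fun _ ha _ hb =>
    (Set.ncard_le_one (hD.subset (Set.sep_subset _ _))).mp hf _ ha _ hb
  exact (monotoneOn_of_cycDescents_subsingleton hD hdesc hS hz hzS hfz).strictMonoOn_of_injOn hinj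

theorem OrientRev.strictAntiOn_val (hf : OrientRev f) (hD : (domSet f).Finite)
    (hS : S ⊆ domSet f) (hinj : S.InjOn (val f)) (hz : z ∈ domSet f)
    (hzS : ∀ x ∈ S, ∀ y ∈ S, z ∉ Set.Icc x y)
    (hfz : ∀ x ∈ S, ∀ y ∈ S, val f z ∉ Set.Icc (val f x) (val f y)) :
    StrictAntiOn (val f) S := by
  have hdesc : (cycDescents (OrderDual.toDual ∘ val f) (domSet f)).Subsingleton :=
    fun _ ha _ hb => (Set.ncard_le_one (hD.subset (Set.sep_subset _ _))).mp hf _ ha _ hb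
  have hanti : AntitoneOn (val f) S := monotoneOn_toDual_comp_iff.mp <|
    monotoneOn_of_cycDescents_subsingleton hD hdesc hS hz hzS
      fun x hx y hy hmem => hfz y hy x hx ⟨hmem.2, hmem.1⟩
  exact hanti.strictAntiOn_of_injOn hinj

theorem Oriented.strictMonoOn_or_strictAntiOn (hf : Oriented f) (hD : (domSet f).Finite)
    {L R : Set ℕ} {a b : ℕ} (hL : L ⊆ domSet f) (hR : R ⊆ domSet f) (ha : a ∈ L) (hb : b ∈ R)
    (hinjL : L.InjOn (val f)) (hinjR : R.InjOn (val f)) (hLR : ∀ x ∈ L, ∀ y ∈ R, x < y)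
    (hLb : ∀ x ∈ L, val f x < val f b) (haR : ∀ y ∈ R, val f a < val f y) :
    (StrictMonoOn (val f) L ∧ StrictMonoOn (val f) R) ∨
      (StrictAntiOn (val f) L ∧ StrictAntiOn (val f) R) := by
  have hb_out : ∀ x ∈ L, ∀ y ∈ L, b ∉ Set.Icc x y := fun _ _ y hy hmem =>
    (hLR y hy b hb).not_ge hmem.2
  have hfb_out : ∀ x ∈ L, ∀ y ∈ L, val f b ∉ Set.Icc (val f x) (val f y) := fun _ _ y hy hmem =>
    (hLb y hy).not_ge hmem.2
  have ha_out : ∀ x ∈ R, ∀ y ∈ R, a ∉ Set.Icc x y := fun x hx _ _ hmem =>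
    (hLR a ha x hx).not_ge hmem.1
  have hfa_out : ∀ x ∈ R, ∀ y ∈ R, val f a ∉ Set.Icc (val f x) (val f y) := fun x hx _ _ hmem =>
    (haR x hx).not_ge hmem.1
  exact hf.imp
    (fun hpres => ⟨hpres.strictMonoOn_val hD hL hinjL (hR hb) hb_out hfb_out,
      hpres.strictMonoOn_val hD hR hinjR (hL ha) ha_out hfa_out⟩)
    (fun hrev => ⟨hrev.strictAntiOn_val hD hL hinjL (hR hb) hb_out hfb_out,
      hrev.strictAntiOn_val hD hR hinjR (hL ha) ha_out hfa_out⟩)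

end Orientation

section InjMajorant

variable {γ f g : PTrans} {A : Set PTrans}

/-- `f` is defined and injective on `dom γ`, with values at least those of `γ`. Every left factor
of an injective `γ` in a semigroup of order-decreasing maps has this property. -/
structure InjMajorant (γ f : PTrans) : Prop where
  domSet_subset : domSet γ ⊆ domSet f
  val_le : ∀ x ∈ domSet γ, val γ x ≤ val f x
  injOn : (domSet γ).InjOn (val f)

theorem InjMajorant.congr (h : InjMajorant γ f) (hfg : (domSet γ).EqOn f g) :
    InjMajorant γ g := by
  have hval : (domSet γ).EqOn (val f) (val g) := fun x hx => by rw [val, hfg hx, val]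
  exact ⟨fun x hx hgx => h.domSet_subset hx ((hfg hx).trans hgx),
    fun x hx => hval hx ▸ h.val_le x hx, h.injOn.congr hval⟩

theorem InjMajorant.of_mul (hg : OrderDecr g) (h : InjMajorant γ (f * g)) : InjMajorant γ f := by
  have hdom := h.domSet_subset.trans domSet_mul_subset
  refine ⟨hdom, fun x hx => ?_, fun x hx y hy hxy => h.injOn hx hy ?_⟩
  · calc val γ x ≤ val (f * g) x := h.val_le x hx
      _ = val g (val f x) := val_mul (hdom hx)
      _ ≤ val f x := hg.val_le _
  · rw [val_mul (hdom hx), val_mul (hdom hy), hxy]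

theorem orderDecr_of_mem_closure (hA : ∀ α ∈ A, OrderDecr α)
    (hf : f ∈ Subsemigroup.closure A) : OrderDecr f := by
  induction hf using Subsemigroup.closure_induction with
  | mem f hf => exact hA f hf
  | mul f g _ _ hf hg => exact hf.mul hg

theorem exists_mem_eqOn_of_mem_closure (hA : ∀ α ∈ A, OrderDecr α)
    (hrigid : ∀ α ∈ A, InjMajorant γ α → domSet γ ⊆ fixSet α ∨ (domSet γ).EqOn α γ)
    (hγ : γ ∈ Subsemigroup.closure A) (hinj : (domSet γ).InjOn (val γ)) :
    ∃ α ∈ A, (domSet γ).EqOn α γ := by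
  have hfactor : ∀ f ∈ Subsemigroup.closure A, InjMajorant γ f →
      ∃ α ∈ A, (domSet γ).EqOn α f ∨ (domSet γ).EqOn α γ := by
    intro f hf
    induction hf using Subsemigroup.closure_induction with
    | mem f hf => exact fun _ => ⟨f, hf, Or.inl fun _ _ => rfl⟩
    | mul f g _ hg ihf ihg =>
      intro hfg
      have hfmaj := hfg.of_mul (orderDecr_of_mem_closure hA hg)
      obtain ⟨α, hα, hαf | hαγ⟩ := ihf hfmaj
      · rcases hrigid α hα (hfmaj.congr hαf.symm) with hfix | hαγ
        · have hfix_f : domSet γ ⊆ fixSet f := fun x hx => (hαf hx).symm.trans (hfix hx)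
          have hcancel : (domSet γ).EqOn (f * g) g := eqOn_mul_of_subset_fixSet hfix_f
          obtain ⟨δ, hδ, hδg | hδγ⟩ := ihg (hfg.congr hcancel)
          · exact ⟨δ, hδ, Or.inl (hδg.trans hcancel.symm)⟩
          · exact ⟨δ, hδ, Or.inr hδγ⟩
        · exact ⟨α, hα, Or.inr hαγ⟩
      · exact ⟨α, hα, Or.inr hαγ⟩
  obtain ⟨α, hα, h⟩ := hfactor γ hγ ⟨subset_rfl, fun _ _ => le_rfl, hinj⟩
  exact ⟨α, hα, h.elim id id⟩

end InjMajorant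

section Slope

variable {v : ℕ → ℕ} {a b x : ℕ}

theorem add_le_add_of_strictMonoOn_Ico (hv : StrictMonoOn v (Set.Ico a b))
    (hx : x ∈ Set.Ico a b) : v a + x ≤ v x + a := by
  obtain ⟨hax, hxb⟩ := hx
  induction x, hax using Nat.le_induction with
  | base => exact le_rfl
  | succ x hax ih =>
    have hstep := hv ⟨hax, by omega⟩ ⟨by omega, hxb⟩ x.lt_succ_self
    have := ih (by omega)
    omega

theorem add_le_add_of_strictAntiOn_Ico (hv : StrictAntiOn v (Set.Ico a b))
    (hx : x ∈ Set.Ico a b) : v x + x ≤ v a + a := by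
  obtain ⟨hax, hxb⟩ := hx
  induction x, hax using Nat.le_induction with
  | base => exact le_rfl
  | succ x hax ih =>
    have hstep := hv ⟨hax, by omega⟩ ⟨by omega, hxb⟩ x.lt_succ_self
    have := ih (by omega)
    omega

end Slope

/-- The map `p + i ↦ p - i` for `i < s` and `q + j ↦ q - j` for `j < u`; thus `γ_{p,q}^{r,s}` is
the case `u = min(r-s, q-p, n-q+1)`. -/
def reflectPair (p q s u : ℕ) : PTrans := fun x =>
  if p ≤ x ∧ x + 1 ≤ p + s then some (2 * p - x)
  else if q ≤ x ∧ x + 1 ≤ q + u then some (2 * q - x)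
  else none

section ReflectPair

variable {n r p q s u x : ℕ} {f : PTrans}

theorem reflectPair_of_mem_left (hx : x ∈ Set.Ico p (p + s)) :
    reflectPair p q s u x = some (2 * p - x) := if_pos hx

theorem reflectPair_of_mem_right (hsq : p + s ≤ q) (hx : x ∈ Set.Ico q (q + u)) :
    reflectPair p q s u x = some (2 * q - x) :=
  (if_neg fun hleft => by have := hx.1; omega).trans (if_pos hx)

theorem domSet_reflectPair :
    domSet (reflectPair p q s u) = Set.Ico p (p + s) ∪ Set.Ico q (q + u) := by
  ext x
  simp only [domSet, reflectPair, Set.mem_ofPred_eq, Set.mem_union, Set.mem_Ico]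
  split_ifs <;> simp <;> omega

theorem val_reflectPair_of_mem_left (hx : x ∈ Set.Ico p (p + s)) :
    val (reflectPair p q s u) x = 2 * p - x :=
  val_eq_of_eq_some (reflectPair_of_mem_left hx)

theorem val_reflectPair_of_mem_right (hsq : p + s ≤ q) (hx : x ∈ Set.Ico q (q + u)) :
    val (reflectPair p q s u) x = 2 * q - x :=
  val_eq_of_eq_some (reflectPair_of_mem_right hsq hx)

theorem injOn_val_reflectPair (hsp : s ≤ p) (hsq : p + s ≤ q) (huq : p + u ≤ q) :
    (domSet (reflectPair p q s u)).InjOn (val (reflectPair p q s u)) := by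
  rw [domSet_reflectPair]
  rintro x (hx | hx) y (hy | hy) hxy <;>
    simp only [val_reflectPair_of_mem_left, val_reflectPair_of_mem_right hsq, hx, hy] at hxy <;>
    simp only [Set.mem_Ico] at hx hy <;> omega

theorem orientRev_reflectPair (hs : 1 ≤ s) (hu : 1 ≤ u) (hsq : p + s ≤ q) (huq : p + u ≤ q) :
    OrientRev (reflectPair p q s u) := by
  have hlast : IsGreatest (domSet (reflectPair p q s u)) (q + u - 1) := by
    rw [domSet_reflectPair]
    refine ⟨Or.inr ⟨by omega, by omega⟩, ?_⟩
    rintro x (⟨-, hx⟩ | ⟨-, hx⟩) <;> omega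
  have hfirst : IsLeast (domSet (reflectPair p q s u)) p := by
    rw [domSet_reflectPair]
    refine ⟨Or.inl ⟨le_rfl, by omega⟩, ?_⟩
    rintro x (⟨hx, -⟩ | ⟨hx, -⟩) <;> omega
  -- the only ascent is the jump from the end of the left block to `q`
  have hsub : ascents (reflectPair p q s u) ⊆ {p + s - 1} := by
    rintro a ⟨ha, hasc⟩
    by_contra hne
    rw [Set.mem_singleton_iff] at hne
    have hnext : a + 1 ∉ domSet (reflectPair p q s u) := fun hmem => by
      rw [cycSucc_eq_add_one hmem] at hasc
      rw [domSet_reflectPair] at ha hmem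
      rcases ha with ha | ha <;> rcases hmem with hmem | hmem <;>
        simp only [val_reflectPair_of_mem_left, val_reflectPair_of_mem_right hsq, ha, hmem]
          at hasc <;>
        simp only [Set.mem_Ico] at ha hmem <;> omega
    obtain rfl : a = q + u - 1 := by
      rw [domSet_reflectPair] at ha hnext
      simp only [Set.mem_union, Set.mem_Ico] at ha hnext
      omega
    rw [cycSucc_eq_of_isGreatest hlast hfirst,
      val_reflectPair_of_mem_right hsq ⟨by omega, by omega⟩,
      val_reflectPair_of_mem_left ⟨le_rfl, by omega⟩] at hasc
    omega
  exact (Set.ncard_le_ncard hsub).trans_eq (Set.ncard_singleton _)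

theorem ncard_im_reflectPair_le : (im (reflectPair p q s u)).ncard ≤ s + u := by
  have hD : (domSet (reflectPair p q s u)).Finite := by
    rw [domSet_reflectPair]
    exact (Set.finite_Ico _ _).union (Set.finite_Ico _ _)
  calc (im (reflectPair p q s u)).ncard
      ≤ (Set.Ico p (p + s) ∪ Set.Ico q (q + u)).ncard := domSet_reflectPair ▸ ncard_im_le hD
    _ ≤ (Set.Ico p (p + s)).ncard + (Set.Ico q (q + u)).ncard := Set.ncard_union_le _ _
    _ = s + u := by simp only [Set.ncard_Ico_nat, Nat.add_sub_cancel_left]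

theorem reflectPair_mem_PORDr (hs : 1 ≤ s) (hu : 1 ≤ u) (hsp : s ≤ p) (hsq : p + s ≤ q)
    (huq : p + u ≤ q) (hun : q + u ≤ n + 1) (hr : s + u ≤ r) :
    reflectPair p q s u ∈ PORDr n r := by
  have hbounds : ∀ x y, reflectPair p q s u x = some y → 1 ≤ y ∧ y ≤ x ∧ x ≤ n := by
    intro x y hxy
    have hx := mem_domSet_of_eq_some hxy
    rw [domSet_reflectPair] at hx
    rw [← val_eq_of_eq_some hxy]
    rcases hx with hx | hx <;>
      simp only [val_reflectPair_of_mem_left, val_reflectPair_of_mem_right hsq, hx] <;>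
      simp only [Set.mem_Ico] at hx <;> omega
  refine ⟨⟨⟨fun x hx => ?_, fun y ⟨x, hxy⟩ => ?_⟩, Or.inr (orientRev_reflectPair hs hu hsq huq),
    fun x y hxy => (hbounds x y hxy).2.1⟩, ncard_im_reflectPair_le.trans hr⟩
  · obtain ⟨hpos, hle, hn⟩ := hbounds x _ (eq_some_val hx)
    exact ⟨hpos.trans hle, hn⟩
  · obtain ⟨hpos, hle, hn⟩ := hbounds x y hxy
    exact ⟨hpos, hle.trans hn⟩

end ReflectPair

section Rigidity

variable {n p q s u c t x : ℕ} {f : PTrans}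

theorem Ico_subset_fixSet_of_strictMonoOn (hdec : OrderDecr f)
    (hdom : Set.Ico c (c + t) ⊆ domSet f) (hmono : StrictMonoOn (val f) (Set.Ico c (c + t)))
    (hc : val f c = c) : Set.Ico c (c + t) ⊆ fixSet f := by
  intro x hx
  have hslope := add_le_add_of_strictMonoOn_Ico hmono hx
  have hval : val f x = x := le_antisymm (hdec.val_le x) (by omega)
  exact (eq_some_val (hdom hx)).trans (congrArg some hval)

theorem eq_some_reflect_of_strictAntiOn (hdom : Set.Ico c (c + t) ⊆ domSet f)
    (hanti : StrictAntiOn (val f) (Set.Ico c (c + t))) (hc : val f c = c)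
    (hlow : ∀ x ∈ Set.Ico c (c + t), 2 * c - x ≤ val f x) :
    ∀ x ∈ Set.Ico c (c + t), f x = some (2 * c - x) := by
  intro x hx
  have hslope := add_le_add_of_strictAntiOn_Ico hanti hx
  have hval : val f x = 2 * c - x := le_antisymm (by omega) (hlow x hx)
  exact (eq_some_val (hdom hx)).trans (congrArg some hval)

theorem InjMajorant.sub_le_val_of_mem_left (h : InjMajorant (reflectPair p q s u) f)
    (hx : x ∈ Set.Ico p (p + s)) : 2 * p - x ≤ val f x :=
  val_reflectPair_of_mem_left (q := q) (u := u) hx ▸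
    h.val_le x (domSet_reflectPair ▸ Or.inl hx)

theorem InjMajorant.sub_le_val_of_mem_right (h : InjMajorant (reflectPair p q s u) f)
    (hsq : p + s ≤ q) (hx : x ∈ Set.Ico q (q + u)) : 2 * q - x ≤ val f x :=
  val_reflectPair_of_mem_right hsq hx ▸ h.val_le x (domSet_reflectPair ▸ Or.inr hx)

theorem InjMajorant.subset_fixSet_or_eqOn (hf : f ∈ PORD n) (hs : 1 ≤ s) (hu : 1 ≤ u)
    (hsq : p + s ≤ q) (huq : p + u ≤ q) (h : InjMajorant (reflectPair p q s u) f) :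
    domSet (reflectPair p q s u) ⊆ fixSet f ∨
      (domSet (reflectPair p q s u)).EqOn f (reflectPair p q s u) := by
  obtain ⟨⟨hdom, -⟩, hor, hdec⟩ := hf
  have hD : (domSet f).Finite := (Set.finite_Icc 1 n).subset hdom
  have hlowL : ∀ x ∈ Set.Ico p (p + s), 2 * p - x ≤ val f x := fun x hx =>
    h.sub_le_val_of_mem_left hx
  have hlowR : ∀ x ∈ Set.Ico q (q + u), 2 * q - x ≤ val f x := fun x hx =>
    h.sub_le_val_of_mem_right hsq hx
  obtain ⟨hsub, -, hinj⟩ := h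
  rw [domSet_reflectPair] at hsub hinj ⊢
  obtain ⟨hsubL, hsubR⟩ := Set.union_subset_iff.mp hsub
  have hpL : p ∈ Set.Ico p (p + s) := ⟨le_rfl, by omega⟩
  have hqR : q ∈ Set.Ico q (q + u) := ⟨le_rfl, by omega⟩
  have hp : val f p = p := le_antisymm (hdec.val_le p) (by have := hlowL p hpL; omega)
  have hq : val f q = q := le_antisymm (hdec.val_le q) (by have := hlowR q hqR; omega)
  have hLR : ∀ x ∈ Set.Ico p (p + s), ∀ y ∈ Set.Ico q (q + u), x < y := fun x hx y hy =>
    (hx.2.trans_le hsq).trans_le hy.1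
  have hLq : ∀ x ∈ Set.Ico p (p + s), val f x < val f q := fun x hx =>
    (hdec.val_le x).trans_lt ((hLR x hx q hqR).trans_eq hq.symm)
  have hpR : ∀ y ∈ Set.Ico q (q + u), val f p < val f y := fun y hy => by
    have hlow := hlowR y hy
    have hlt := hy.2
    omega
  rcases hor.strictMonoOn_or_strictAntiOn hD hsubL hsubR hpL hqR
    (hinj.mono Set.subset_union_left) (hinj.mono Set.subset_union_right) hLR hLq hpR with
    ⟨hmonoL, hmonoR⟩ | ⟨hantiL, hantiR⟩
  · exact Or.inl <| Set.union_subset (Ico_subset_fixSet_of_strictMonoOn hdec hsubL hmonoL hp)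
      (Ico_subset_fixSet_of_strictMonoOn hdec hsubR hmonoR hq)
  · refine Or.inr (Set.EqOn.union (fun x hx => ?_) fun x hx => ?_)
    · rw [eq_some_reflect_of_strictAntiOn hsubL hantiL hp hlowL x hx, reflectPair_of_mem_left hx]
    · rw [eq_some_reflect_of_strictAntiOn hsubR hantiR hq hlowR x hx,
        reflectPair_of_mem_right hsq hx]

theorem exists_mem_eqOn_reflectPair {A : Set PTrans} (hA : A ⊆ PORD n) (hs : 1 ≤ s)
    (hu : 1 ≤ u) (hsp : s ≤ p) (hsq : p + s ≤ q) (huq : p + u ≤ q)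
    (hγ : reflectPair p q s u ∈ Subsemigroup.closure A) :
    ∃ α ∈ A, (domSet (reflectPair p q s u)).EqOn α (reflectPair p q s u) :=
  exists_mem_eqOn_of_mem_closure (fun _ hα => (hA hα).2.2)
    (fun _ hα hmaj => hmaj.subset_fixSet_or_eqOn (hA hα) hs hu hsq huq) hγ
    (injOn_val_reflectPair hsp hsq huq)

end Rigidity

end OrientedPT

open OrientedPT in
theorem genSet_contains_gammaRS_general {n r p q s : ℕ} {A : Set PTrans}
    (hA : IsGenSet (PORDr n r) A) (hq : q ≤ n) (hs : 1 ≤ s)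
    (hs_le : s ≤ min p (min (q - p) (r - 1))) :
    ∃ α ∈ A, restrict α (domSet (gammaRS n r p q s)) = gammaRS n r p q s := by
  have hγ : gammaRS n r p q s ∈ PORDr n r :=
    reflectPair_mem_PORDr hs (by omega) (by omega) (by omega) (by omega) (by omega) (by omega)
  rw [← hA.2] at hγ
  obtain ⟨α, hα, heq⟩ := exists_mem_eqOn_reflectPair (hA.1.trans fun _ hf => hf.1) hs
    (by omega) (by omega) (by omega) (by omega) hγ
  exact ⟨α, hα, restrict_domSet_eq_of_eqOn heq⟩

open OrientedPT in
/-- For `n ≥ 4`, `3 ≤ r < n − ⌊n/3⌋`, `1 ≤ p ≤ q−2 ≤ n−2`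
and any generating set `A` of `PORD(n,r)`: for each `1 ≤ s ≤ min{p, q−p, r−1}`
with `(q,s) ≠ (n,1)` there is `α ∈ A` whose restriction to `dom(γ_{p,q}^{r,s})`
equals `γ_{p,q}^{r,s}`. -/
theorem genSet_contains_gammaRS (n r p q : ℕ) (hn : 4 ≤ n) (hr1 : 3 ≤ r)
    (hr2 : r < n - n / 3) (hp : 1 ≤ p) (hpq : p + 2 ≤ q) (hq : q ≤ n)
    (A : Set PTrans) (hA : IsGenSet (PORDr n r) A) :
    ∀ s : ℕ, 1 ≤ s → s ≤ min p (min (q - p) (r - 1)) → ¬(q = n ∧ s = 1) →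
      ∃ α ∈ A, restrict α (domSet (gammaRS n r p q s)) = gammaRS n r p q s := by
  intro s hs hs_le _
  exact genSet_contains_gammaRS_general hA hq hs hs_le
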